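/- arXiv:2011.05835 — 2 statements merged into one kernel-verified Lean document; each statement's English description precedes it below -/
import Mathlib

section
/- Let X = ℓ∞ⁿ and let Y be a two-dimensional real normed linear space. Let T : X → Y be a bounded linear operator with ‖T‖ = 1 such that Ext(B_X) ⊆ M_T and Tx is smooth for every x ∈ Ext(B_X). Suppose rank(T) = 2 and there exist x ∈ Ext(B_X) and distinct points u, v ∈ T(B_X) such that Tx lies in the open segment between u and v (i.e., Tx is an interior point of some line segment of T(B_X)). Then T is n-smooth, i.e., dim span J(T) = n. -/
open Metric Set Module

/-- `J x` is the set of supporting functionals of `x`. -/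
def suppFunctionals {E : Type*} [NormedAddCommGroup E] [NormedSpace ℝ E] (x : E) :
    Set (E →L[ℝ] ℝ) := {f | ‖f‖ = 1 ∧ f x = 1}

/-- A point is smooth if it has a unique supporting functional. -/
def IsSmoothPoint {E : Type*} [NormedAddCommGroup E] [NormedSpace ℝ E] (x : E) : Prop :=
  ∃ g, suppFunctionals x = {g}

open Filter Topology

theorem aux_sign_ext {n : ℕ} (x : Fin n → ℝ) :
    x ∈ extremePoints ℝ (closedBall (0 : Fin n → ℝ) 1) ↔ ∀ i, |x i| = 1 := by
  constructor
  · intro h i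
    rw [mem_extremePoints_iff_left] at h
    obtain ⟨hx, h⟩ := h
    have hb : ∀ k, |x k| ≤ 1 := by
      rw [mem_closedBall_zero_iff, pi_norm_le_iff_of_nonneg zero_le_one] at hx
      simpa using hx
    by_contra hne
    have hlt : |x i| < 1 := lt_of_le_of_ne (hb i) hne
    have key : ∀ s : ℝ, |s| ≤ 1 - |x i| → x + Pi.single i s ∈ closedBall (0 : Fin n → ℝ) 1 := by
      intro s hs
      rw [mem_closedBall_zero_iff, pi_norm_le_iff_of_nonneg zero_le_one]
      intro k
      by_cases hk : k = i
      · subst hk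
        simp only [Pi.add_apply, Pi.single_eq_same, Real.norm_eq_abs]
        linarith [abs_add_le (x k) s]
      · simpa [hk] using hb k
    have h1 := key (1 - |x i|) (by rw [abs_of_pos]; linarith)
    have h2 := key (-(1 - |x i|)) (by rw [abs_neg, abs_of_pos]; linarith)
    have h3 := h _ h1 _ h2 ⟨1/2, 1/2, by norm_num, by norm_num, by norm_num, by
      rw [Pi.single_neg]; module⟩
    have h4 := congrFun h3 i
    simp at h4
    linarith
  · intro h
    rw [mem_extremePoints_iff_left]
    refine ⟨?_, ?_⟩
    · rw [mem_closedBall_zero_iff, pi_norm_le_iff_of_nonneg zero_le_one]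
      intro i; simp [h i]
    · rintro u hu v hv ⟨a, b, ha, hb, hab, rfl⟩
      rw [mem_closedBall_zero_iff, pi_norm_le_iff_of_nonneg zero_le_one] at hu hv
      ext i
      have h1 := hu i
      have h2 := hv i
      have h3 := h i
      simp only [Real.norm_eq_abs, abs_le] at h1 h2
      simp only [Pi.add_apply, Pi.smul_apply, smul_eq_mul] at h3 ⊢
      have hb' : b = 1 - a := by linarith
      subst hb'
      rcases (abs_eq zero_le_one).1 h3 with h3 | h3
      · have : u i = 1 := by nlinarith
        rw [h3, this]
      · have : u i = -1 := by nlinarith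
        rw [h3, this]

theorem aux_apply {n : ℕ} {Y : Type*} [NormedAddCommGroup Y] [NormedSpace ℝ Y]
    (T : (Fin n → ℝ) →L[ℝ] Y) (f : Y →L[ℝ] ℝ) (x : Fin n → ℝ) :
    f (T x) = ∑ i, x i * f (T (Pi.single i 1)) := by
  conv_lhs => rw [pi_eq_sum_univ' x]
  simp [map_sum, map_smul]

/-- A functional nearly attaining the norm of `A` at a sign vector. -/
theorem aux_attain {n : ℕ} {Y : Type*} [NormedAddCommGroup Y] [NormedSpace ℝ Y]
    (A : (Fin n → ℝ) →L[ℝ] Y) (r : ℝ) (hr : r < ‖A‖) :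
    ∃ x : Fin n → ℝ, (∀ i, |x i| = 1) ∧ ∃ f : Y →L[ℝ] ℝ, ‖f‖ ≤ 1 ∧ r ≤ f (A x) := by
  obtain ⟨x0, hx0, h⟩ := A.exists_lt_apply_of_lt_opNorm hr
  obtain ⟨f, hf, hfx⟩ := exists_dual_vector'' ℝ (A x0)
  have hb : ∀ k, |x0 k| ≤ 1 := by
    have := hx0.le
    rw [pi_norm_le_iff_of_nonneg zero_le_one] at this
    simpa using this
  refine ⟨fun i => if 0 ≤ f (A (Pi.single i 1)) then 1 else -1, ?_, f, hf, ?_⟩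
  · intro i; dsimp only; split_ifs <;> simp
  · have h1 : r < f (A x0) := by rw [hfx]; exact h
    refine h1.le.trans ?_
    rw [aux_apply, aux_apply A]
    refine Finset.sum_le_sum fun i _ => ?_
    have := abs_le.1 (hb i)
    split_ifs with h0 <;> nlinarith

theorem aux_le {n : ℕ} {Y : Type*} [NormedAddCommGroup Y] [NormedSpace ℝ Y]
    [FiniteDimensional ℝ Y] (T S : (Fin n → ℝ) →L[ℝ] Y) (F : ((Fin n → ℝ) →L[ℝ] Y) →L[ℝ] ℝ)
    (hF : ‖F‖ = 1) (hFT : F T = 1) (hT : ‖T‖ = 1)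
    (hS : ∀ x : Fin n → ℝ, (∀ i, |x i| = 1) → ∀ f : Y →L[ℝ] ℝ, ‖f‖ ≤ 1 → f (T x) = 1 →
      f (S x) = 0) : F S ≤ 0 := by
  by_contra hc
  push Not at hc
  have hp : ∀ m : ℕ, ∃ p : (Fin n → ℝ) × (Y →L[ℝ] ℝ), ((∀ i, |p.1 i| = 1) ∧ ‖p.2‖ ≤ 1) ∧
      1 + (1 / ((m : ℝ) + 1)) * (F S / 2) ≤ p.2 (T p.1) + (1 / ((m : ℝ) + 1)) * p.2 (S p.1) := by
    intro m
    have ht : 0 < 1 / ((m : ℝ) + 1) := by positivity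
    set t := 1 / ((m : ℝ) + 1)
    have h1 : F (T + t • S) ≤ ‖T + t • S‖ := by
      have := F.le_opNorm (T + t • S)
      rw [hF, one_mul] at this
      exact (le_abs_self _).trans this
    have h2 : 1 + t * (F S / 2) < ‖T + t • S‖ := by
      refine lt_of_lt_of_le ?_ h1
      simp only [map_add, map_smul, hFT, smul_eq_mul]
      nlinarith
    obtain ⟨x, hx, f, hf, h⟩ := aux_attain _ _ h2
    exact ⟨(x, f), ⟨hx, hf⟩, by simpa using h⟩
  choose p hp1 hp2 using hp
  have hcpt : IsCompact ({x : Fin n → ℝ | ∀ i, |x i| = 1} ×ˢ closedBall (0 : Y →L[ℝ] ℝ) 1) := by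
    refine IsCompact.prod ?_ (isCompact_closedBall _ _)
    refine (isCompact_closedBall (0 : Fin n → ℝ) 1).of_isClosed_subset ?_ ?_
    · simp only [Set.ofPred_forall]
      exact isClosed_iInter fun i => isClosed_eq (by fun_prop) continuous_const
    · intro x hx
      exact ((aux_sign_ext x).2 hx).1
  obtain ⟨⟨x, f⟩, hxf, φ, hφ, hlim⟩ := hcpt.tendsto_subseq (x := p)
    (fun m => ⟨(hp1 m).1, by simpa using (hp1 m).2⟩)
  obtain ⟨hx, hf⟩ := hxf
  have hx : ∀ i, |x i| = 1 := hx
  have hf : ‖f‖ ≤ 1 := by simpa using hf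
  have cT : Continuous fun q : (Fin n → ℝ) × (Y →L[ℝ] ℝ) => q.2 (T q.1) := by fun_prop
  have cS : Continuous fun q : (Fin n → ℝ) × (Y →L[ℝ] ℝ) => q.2 (S q.1) := by fun_prop
  have lT := (cT.tendsto _).comp hlim
  have lS := (cS.tendsto _).comp hlim
  have lt : Tendsto (fun m => 1 / ((φ m : ℝ) + 1)) atTop (𝓝 0) :=
    tendsto_one_div_add_atTop_nhds_zero_nat.comp hφ.tendsto_atTop
  have bT : ∀ (y : Fin n → ℝ) (f : Y →L[ℝ] ℝ), (∀ i, |y i| = 1) → ‖f‖ ≤ 1 → f (T y) ≤ 1 := by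
    intro y f hy hf
    have h1 : ‖y‖ ≤ 1 := by simpa using ((aux_sign_ext y).2 hy).1
    have h2 : ‖T y‖ ≤ 1 := T.le_of_opNorm_le_of_le hT.le h1 |>.trans (by simp)
    have h3 : ‖f (T y)‖ ≤ 1 := f.le_of_opNorm_le_of_le hf h2 |>.trans (by simp)
    exact (le_abs_self _).trans h3
  have h1 : 1 ≤ f (T x) := by
    have a1 : Tendsto (fun m => 1 + (1 / ((φ m : ℝ) + 1)) * (F S / 2)) atTop (𝓝 (1 + 0 * (F S / 2))) :=
      tendsto_const_nhds.add (lt.mul tendsto_const_nhds)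
    have a2 := lT.add (lt.mul lS)
    have := le_of_tendsto_of_tendsto' a1 a2 (fun m => hp2 (φ m))
    simpa using this
  have h2 : F S / 2 ≤ f (S x) := by
    refine ge_of_tendsto' lS fun m => ?_
    have a := hp2 (φ m)
    have b := bT _ _ (hp1 (φ m)).1 (hp1 (φ m)).2
    have ht : 0 < 1 / ((φ m : ℝ) + 1) := by positivity
    simp only [Function.comp]
    nlinarith
  have := hS x hx f hf (le_antisymm (bT x f hx hf) h1)
  linarith

theorem stmt_5 {n : ℕ} {Y : Type*} [NormedAddCommGroup Y] [NormedSpace ℝ Y]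
    [FiniteDimensional ℝ Y] (hY : finrank ℝ Y = 2)
    (T : (Fin n → ℝ) →L[ℝ] Y) (hT : ‖T‖ = 1)
    (hMT : extremePoints ℝ (closedBall (0 : Fin n → ℝ) 1) ⊆
      {x ∈ sphere (0 : Fin n → ℝ) 1 | ‖T x‖ = ‖T‖})
    (hsm : ∀ x ∈ extremePoints ℝ (closedBall (0 : Fin n → ℝ) 1), IsSmoothPoint (T x))
    (hrank : finrank ℝ (LinearMap.range (T : (Fin n → ℝ) →ₗ[ℝ] Y)) = 2)
    (hint : ∃ x ∈ extremePoints ℝ (closedBall (0 : Fin n → ℝ) 1),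
      ∃ u ∈ T '' closedBall (0 : Fin n → ℝ) 1, ∃ v ∈ T '' closedBall (0 : Fin n → ℝ) 1,
        u ≠ v ∧ T x ∈ openSegment ℝ u v) :
    finrank ℝ (Submodule.span ℝ (suppFunctionals T)) = n := by
  classical
  -- bounds on T
  have bnd : ∀ y ∈ closedBall (0 : Fin n → ℝ) 1, ∀ f : Y →L[ℝ] ℝ, ‖f‖ ≤ 1 → f (T y) ≤ 1 := by
    intro y hy f hf
    have h1 : ‖y‖ ≤ 1 := by simpa using hy
    have h2 : ‖T y‖ ≤ 1 := T.le_of_opNorm_le_of_le hT.le h1 |>.trans (by simp)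
    have h3 : ‖f (T y)‖ ≤ 1 := f.le_of_opNorm_le_of_le hf h2 |>.trans (by simp)
    exact (le_abs_self _).trans h3
  have memB : ∀ y : Fin n → ℝ, y ∈ closedBall (0 : Fin n → ℝ) 1 ↔ ∀ i, |y i| ≤ 1 := by
    intro y
    rw [mem_closedBall_zero_iff, pi_norm_le_iff_of_nonneg zero_le_one]
    simp
  obtain ⟨x, hx, _, ⟨u, hu, rfl⟩, _, ⟨v, hv, rfl⟩, huv, s, t, hs, ht, hst, hseg⟩ := hint
  have hx1 := (aux_sign_ext x).1 hx
  obtain ⟨g, hg⟩ := hsm x hx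
  have hgJ : g ∈ suppFunctionals (T x) := by rw [hg]; rfl
  obtain ⟨hg1, hgx⟩ := hgJ
  have htt : t = 1 - s := by linarith
  subst htt
  -- a functional of norm one attaining 1 in the middle attains 1 at both ends
  have mid : ∀ p q : ℝ, p ≤ 1 → q ≤ 1 → s * p + (1 - s) * q = 1 → p = 1 ∧ q = 1 := by
    intro p q hp hq h
    constructor <;> nlinarith
  have hguv : g (T u) = 1 ∧ g (T v) = 1 := by
    refine mid _ _ (bnd u hu g hg1.le) (bnd v hv g hg1.le) ?_
    have := hgx
    rw [← hseg] at this; simpa using this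
  -- coordinates
  set a : Fin n → ℝ := fun i => g (T (Pi.single i 1)) with ha
  have hga : ∀ y, g (T y) = ∑ i, y i * a i := fun y => aux_apply T g y
  have hsum : ∑ i, |a i| ≤ 1 := by
    have h1 := bnd (fun i => if 0 ≤ a i then 1 else -1)
      ((memB _).2 (by intro i; split_ifs <;> simp)) g hg1.le
    rw [hga] at h1
    convert h1 using 2 with i
    split_ifs with h
    · rw [abs_of_nonneg h, one_mul]
    · rw [abs_of_neg (not_le.1 h), neg_one_mul]
  have hface : ∀ y ∈ closedBall (0 : Fin n → ℝ) 1, g (T y) = 1 → ∀ i, y i * a i = |a i| := by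
    intro y hy hgy
    have hle : ∀ i ∈ Finset.univ, y i * a i ≤ |a i| := by
      intro i _
      refine (le_abs_self _).trans ?_
      rw [abs_mul]
      exact mul_le_of_le_one_left (abs_nonneg _) ((memB y).1 hy i)
    have heq : ∑ i, y i * a i = ∑ i, |a i| := by
      refine le_antisymm (Finset.sum_le_sum hle) ?_
      rw [← hga, hgy]; exact hsum
    intro i
    exact (Finset.sum_eq_sum_iff_of_le hle).1 heq i (Finset.mem_univ i)
  have hsum1 : ∑ i, |a i| = 1 := by
    rw [← hgx, hga]
    exact Finset.sum_congr rfl fun i _ => (hface x hx.1 hgx i).symm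
  obtain ⟨j, hj⟩ : ∃ j, a j ≠ 0 := by
    by_contra h
    push Not at h
    simp [h] at hsum1
  have hyj : ∀ y ∈ closedBall (0 : Fin n → ℝ) 1, g (T y) = 1 → y j = x j := by
    intro y hy h
    exact mul_right_cancel₀ hj ((hface y hy h j).trans (hface x hx.1 hgx j).symm)
  -- flip coordinate j
  set d : Fin n → ℝ := Pi.single j (-2 * x j) with hd
  have flip : ∀ y ∈ closedBall (0 : Fin n → ℝ) 1, g (T y) = 1 →
      y + d ∈ closedBall (0 : Fin n → ℝ) 1 := by
    intro y hy h
    rw [memB] at hy ⊢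
    intro i
    by_cases hi : i = j
    · subst hi
      have h1 : (y + d) i = - x i := by
        simp only [hd, Pi.add_apply, Pi.single_eq_same, hyj y ((memB y).2 hy) h]; ring
      rw [h1, abs_neg, hx1]
    · simpa [hd, hi] using hy i
  have hz : x + d ∈ extremePoints ℝ (closedBall (0 : Fin n → ℝ) 1) := by
    rw [aux_sign_ext]
    intro i
    by_cases hi : i = j
    · subst hi
      have h1 : (x + d) i = - x i := by
        simp only [hd, Pi.add_apply, Pi.single_eq_same]; ring
      rw [h1, abs_neg, hx1]
    · simpa [hd, hi] using hx1 i
  obtain ⟨h, hh⟩ := hsm _ hz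
  have hhJ : h ∈ suppFunctionals (T (x + d)) := by rw [hh]; rfl
  obtain ⟨hh1, hhz⟩ := hhJ
  have hhuv : h (T (u + d)) = 1 ∧ h (T (v + d)) = 1 := by
    refine mid _ _ (bnd _ (flip u hu hguv.1) h hh1.le) (bnd _ (flip v hv hguv.2) h hh1.le) ?_
    have := hhz
    rw [map_add T x d, ← hseg] at this
    simp only [map_add, map_smul, smul_eq_mul] at this ⊢
    linarith
  -- h is a multiple of g
  set w := T v - T u with hw
  have hw0 : w ≠ 0 := sub_ne_zero.2 (Ne.symm huv)
  have hgw : g w = 0 := by simp [hw, hguv.1, hguv.2]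
  have hhw : h w = 0 := by
    have h1 := hhuv.1
    have h2 := hhuv.2
    simp only [map_add] at h1 h2
    simp only [hw, map_sub]
    linarith
  have hker : ∀ y, g y = 0 → ∃ c : ℝ, c • w = y := by
    have hg0 : (g : Y →ₗ[ℝ] ℝ) ≠ 0 := by
      intro h0
      have : g (T x) = 0 := by
        have := LinearMap.congr_fun h0 (T x)
        simpa using this
      rw [hgx] at this
      exact one_ne_zero this
    have hr : finrank ℝ (LinearMap.ker (g : Y →ₗ[ℝ] ℝ)) = 1 := by
      have h1 := Module.Dual.finrank_ker_add_one_of_ne_zero (f := (g : Y →ₗ[ℝ] ℝ)) hg0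
      omega
    intro y hy
    have h2 := (finrank_eq_one_iff_of_nonzero' (⟨w, hgw⟩ : LinearMap.ker (g : Y →ₗ[ℝ] ℝ))
      (by simpa [Subtype.ext_iff] using hw0)).1 hr ⟨y, hy⟩
    obtain ⟨c, hc⟩ := h2
    exact ⟨c, congrArg Subtype.val hc⟩
  have hmul : h = h (T x) • g := by
    ext y
    obtain ⟨c, hc⟩ := hker (y - g y • T x) (by simp [hgx])
    have h3 : h (y - g y • T x) = 0 := by rw [← hc]; simp [hhw]
    simp only [map_sub, map_smul, smul_eq_mul, sub_eq_zero] at h3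
    simp [h3, mul_comm]
  have habs : |h (T x)| = 1 := by
    have h4 : ‖h‖ = ‖h (T x) • g‖ := congrArg _ hmul
    rw [norm_smul, hg1, hh1, mul_one] at h4
    exact h4.symm
  have hgz : |g (T (x + d))| = 1 := by
    have h5 : h (T x) * g (T (x + d)) = 1 := by
      rw [← hhz]; conv_rhs => rw [hmul]
      simp
    have h6 := congrArg abs h5
    rw [abs_mul, habs, one_mul, abs_one] at h6
    exact h6
  have hgd : g (T d) = -2 * |a j| := by
    rw [← hface x hx.1 hgx j, hga, Finset.sum_eq_single j]
    · simp [hd]; ring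
    · intro i _ hi; simp [hd, hi]
    · simp
  have haj : |a j| = 1 := by
    rw [map_add, map_add, hgx, hgd] at hgz
    have hpos : 0 < |a j| := abs_pos.2 hj
    rcases (abs_eq zero_le_one).1 hgz with h7 | h7 <;> linarith
  have hai : ∀ i, i ≠ j → a i = 0 := by
    intro i hi
    rw [← Finset.add_sum_erase _ _ (Finset.mem_univ j), haj] at hsum1
    have h8 : ∑ i ∈ Finset.univ.erase j, |a i| = 0 := by linarith
    rw [Finset.sum_eq_zero_iff_of_nonneg (fun _ _ => abs_nonneg _)] at h8
    exact abs_eq_zero.1 (h8 i (by simp [hi]))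
  have hgy : ∀ y, g (T y) = y j * a j := by
    intro y
    rw [hga, Finset.sum_eq_single j]
    · intro i _ hi; simp [hai i hi]
    · simp
  have hgabs : ∀ y : Fin n → ℝ, (∀ i, |y i| = 1) → g (T y) * g (T y) = 1 := by
    intro y hy
    rw [hgy, ← abs_mul_abs_self, abs_mul, hy, haj]; norm_num
  have hgabs' : ∀ y : Fin n → ℝ, (∀ i, |y i| = 1) → |g (T y)| = 1 := by
    intro y hy
    rw [hgy, abs_mul, hy, haj]; norm_num
  have huniq : ∀ y : Fin n → ℝ, (∀ i, |y i| = 1) → ∀ f : Y →L[ℝ] ℝ, ‖f‖ ≤ 1 → f (T y) = 1 →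
      f = g (T y) • g := by
    intro y hy f hf hfy
    have hye := (aux_sign_ext y).2 hy
    obtain ⟨k, hk⟩ := hsm y hye
    have hTy : ‖T y‖ = 1 := (hMT hye).2.trans hT
    have m1 : f ∈ suppFunctionals (T y) := by
      refine ⟨le_antisymm hf ?_, hfy⟩
      have := f.le_opNorm (T y)
      rw [hfy, hTy] at this
      simpa using this
    have m2 : g (T y) • g ∈ suppFunctionals (T y) := by
      refine ⟨?_, ?_⟩
      · rw [norm_smul, hg1, mul_one]; exact hgabs' y hy
      · simpa using hgabs y hy
    rw [hk] at m1 m2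
    exact m1.trans m2.symm
  have hzero : ∀ F ∈ suppFunctionals T, ∀ S : (Fin n → ℝ) →L[ℝ] Y, (∀ y, g (S y) = 0) →
      F S = 0 := by
    rintro F ⟨hF, hFT⟩ S hS
    refine le_antisymm (aux_le T S F hF hFT hT ?_) ?_
    · intro y hy f hf hfy
      rw [huniq y hy f hf hfy]
      simp [hS]
    · have := aux_le T (-S) F hF hFT hT (by
        intro y hy f hf hfy
        rw [huniq y hy f hf hfy]
        simp [hS])
      simp at this
      exact this
  -- the isomorphism
  let Φ : (Fin n → ℝ) →ₗ[ℝ] (((Fin n → ℝ) →L[ℝ] Y) →L[ℝ] ℝ) :=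
    { toFun := fun y => g.comp (ContinuousLinearMap.apply ℝ Y y)
      map_add' := by intro y z; ext S; simp
      map_smul' := by intro c y; ext S; simp }
  have hΦ : ∀ y S, Φ y S = g (S y) := fun y S => rfl
  have hrk1 : ∀ i, ∀ y, (ContinuousLinearMap.smulRight
      (ContinuousLinearMap.proj i : (Fin n → ℝ) →L[ℝ] ℝ) (T x)) y = y i • T x := by
    intro i y; simp
  have hinj : Function.Injective Φ := by
    rw [injective_iff_map_eq_zero]
    intro y hy
    ext i
    have := congrArg (fun G => G (ContinuousLinearMap.smulRight
      (ContinuousLinearMap.proj i : (Fin n → ℝ) →L[ℝ] ℝ) (T x))) hy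
    simp only [hΦ, hrk1] at this
    simpa [hgx] using this
  have hspan : Submodule.span ℝ (suppFunctionals T) = LinearMap.range Φ := by
    apply le_antisymm
    · rw [Submodule.span_le]
      intro F hF
      refine ⟨fun i => F (ContinuousLinearMap.smulRight
        (ContinuousLinearMap.proj i : (Fin n → ℝ) →L[ℝ] ℝ) (T x)), ?_⟩
      ext S
      have h9 := hzero F hF (S - (g.comp S).smulRight (T x)) (by intro y; simp [hgx])
      rw [map_sub, sub_eq_zero] at h9
      have h10 : (g.comp S).smulRight (T x) = ∑ i, g (S (Pi.single i 1)) •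
          ContinuousLinearMap.smulRight
            (ContinuousLinearMap.proj i : (Fin n → ℝ) →L[ℝ] ℝ) (T x) := by
        refine ContinuousLinearMap.ext fun y => ?_
        rw [ContinuousLinearMap.smulRight_apply, ContinuousLinearMap.comp_apply, aux_apply S g y,
          _root_.sum_apply, Finset.sum_smul]
        refine Finset.sum_congr rfl fun i _ => ?_
        rw [_root_.smul_apply, hrk1, smul_smul, mul_comm]
      rw [h9, h10, hΦ, aux_apply, map_sum]
      refine Finset.sum_congr rfl fun i _ => ?_
      rw [map_smul, smul_eq_mul, mul_comm]
    · have hsg : ∀ y : Fin n → ℝ, (∀ i, |y i| = 1) →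
          Φ y ∈ Submodule.span ℝ (suppFunctionals T) := by
        intro y hy
        have hm : g (T y) • Φ y ∈ suppFunctionals T := by
          have hval : (g (T y) • Φ y) T = 1 := by
            simpa [hΦ] using hgabs y hy
          refine ⟨le_antisymm ?_ ?_, hval⟩
          · refine ContinuousLinearMap.opNorm_le_bound _ zero_le_one fun S => ?_
            have e1 : ‖y‖ ≤ 1 := by simpa using ((aux_sign_ext y).2 hy).1
            have e2 : ‖S y‖ ≤ ‖S‖ * 1 := S.le_of_opNorm_le_of_le le_rfl e1
            have e3 : ‖g (S y)‖ ≤ 1 * (‖S‖ * 1) := g.le_of_opNorm_le_of_le hg1.le e2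
            rw [_root_.smul_apply, hΦ, norm_smul, Real.norm_eq_abs, hgabs' y hy]
            linarith
          · have := (g (T y) • Φ y).le_opNorm T
            rw [hval, hT] at this
            simpa using this
        have := Submodule.smul_mem _ (g (T y)) (Submodule.subset_span hm)
        rwa [smul_smul, hgabs y hy, one_smul] at this
      rintro _ ⟨y, rfl⟩
      have hsi : ∀ i, Φ (Pi.single i 1) ∈ Submodule.span ℝ (suppFunctionals T) := by
        intro i
        have e1 := hsg (fun _ => 1) (by simp)
        have e2 := hsg (fun k => if k = i then -1 else 1) (by
          intro k; split_ifs <;> simp)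
        have e3 : (Pi.single i 1 : Fin n → ℝ) =
            (1/2 : ℝ) • ((fun _ => 1) - (fun k => if k = i then -1 else 1)) := by
          ext k
          by_cases hk : k = i
          · subst hk; simp; norm_num
          · simp [hk]
        rw [e3, map_smul, map_sub]
        exact Submodule.smul_mem _ _ (Submodule.sub_mem _ e1 e2)
      rw [pi_eq_sum_univ' y, map_sum]
      refine Submodule.sum_mem _ fun i _ => ?_
      rw [map_smul]
      exact Submodule.smul_mem _ _ (hsi i)
  rw [hspan, LinearMap.finrank_range_of_inj hinj]
  simp
end

section
/- Let X = ℓ∞³, Y = ℓ₁³, and let T : X → Y be a bounded linear operator with ‖T‖ = 1 such that M_T ∩ Ext(B_X) = {±x₁, ±x₂, ±x₃, ±x₄}. Suppose Tx is smooth for every x ∈ M_T ∩ Ext(B_X) (i.e., |S₁| = 8), and suppose there exist x_i, x_j ∈ S₁ with ±J(Tx_i) ≠ ±J(Tx_j). Then T is 4-smooth, i.e., dim span J(T) = 4. -/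
open Metric Set Module Pointwise

noncomputable section

/-- ℓ∞³ : ℝ³ with the max norm. -/
abbrev Linf3 := Fin 3 → ℝ

/-- ℓ₁³ : ℝ³ with the ℓ¹ norm. -/
abbrev L13 := PiLp 1 (fun _ : Fin 3 => ℝ)

def x₁ : Linf3 := ![1, 1, 1]
def x₂ : Linf3 := ![-1, 1, 1]
def x₃ : Linf3 := ![-1, -1, 1]
def x₄ : Linf3 := ![1, -1, 1]

/-- `M_T ∩ Ext(B_X)`: the norm-attainment set of `T` intersected with the
extreme points of the closed unit ball. -/
def MTExt (T : Linf3 →L[ℝ] L13) : Set Linf3 :=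
  {x ∈ sphere (0 : Linf3) 1 | ‖T x‖ = ‖T‖} ∩ extremePoints ℝ (closedBall (0 : Linf3) 1)

/-- `Sk T k` is the set `S_k` of points `x` of `M_T ∩ Ext(B_X)` such that `T x` is
`k`-smooth. -/
def Sk (T : Linf3 →L[ℝ] L13) (k : ℕ) : Set Linf3 :=
  {x ∈ MTExt T | finrank ℝ (Submodule.span ℝ (suppFunctionals (T x))) = k}

/-- `±A`, i.e. `A ∪ (-A)`. -/
def pm {E : Type*} [NormedAddCommGroup E] [NormedSpace ℝ E] (A : Set (E →L[ℝ] ℝ)) :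
    Set (E →L[ℝ] ℝ) := A ∪ (-A)

def vert : Fin 4 → Linf3 := ![x₁, x₂, x₃, x₄]

lemma l1norm (y : L13) : ‖y‖ = |y 0| + |y 1| + |y 2| := by
  rw [PiLp.norm_eq_of_L1]; simp [Fin.sum_univ_three]

/-- the functional with coefficient vector `s`. -/
def phi (s : Fin 3 → ℝ) : L13 →L[ℝ] ℝ :=
  ∑ i, s i • (PiLp.proj 1 (fun _ : Fin 3 => ℝ) i : L13 →L[ℝ] ℝ)

lemma phi_apply (s : Fin 3 → ℝ) (y : L13) : phi s y = s 0 * y 0 + s 1 * y 1 + s 2 * y 2 := by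
  simp [phi, Fin.sum_univ_three]

lemma phi_le (s : Fin 3 → ℝ) (hs : ∀ i, |s i| ≤ 1) (y : L13) : |phi s y| ≤ ‖y‖ := by
  rw [phi_apply, l1norm]
  have h : ∀ i, |s i * y i| ≤ |y i| := fun i => by
    rw [abs_mul]; exact mul_le_of_le_one_left (abs_nonneg _) (hs i)
  calc _ ≤ |s 0 * y 0| + |s 1 * y 1| + |s 2 * y 2| := abs_add_three _ _ _
    _ ≤ _ := by linarith [h 0, h 1, h 2]

lemma phi_mem (s : Fin 3 → ℝ) (hs : ∀ i, |s i| ≤ 1) (y : L13) (hy : ‖y‖ = 1)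
    (h : phi s y = 1) : phi s ∈ suppFunctionals y := by
  refine ⟨le_antisymm ?_ ?_, h⟩
  · refine ContinuousLinearMap.opNorm_le_bound _ zero_le_one fun z => ?_
    rw [one_mul]; exact phi_le s hs z
  · have := (phi s).le_opNorm y
    rw [h, hy] at this
    simpa using this

lemma supp_unique {y : L13} (h : finrank ℝ (Submodule.span ℝ (suppFunctionals y)) = 1)
    {f g : L13 →L[ℝ] ℝ} (hf : f ∈ suppFunctionals y) (hg : g ∈ suppFunctionals y) : f = g := by
  have : Module.Free ℝ (Submodule.span ℝ (suppFunctionals y)) :=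
    Module.Free.of_divisionRing ℝ (Submodule.span ℝ (suppFunctionals y))
  obtain ⟨v, -, hv⟩ := (finrank_eq_one_iff' (K := ℝ)
    (V := Submodule.span ℝ (suppFunctionals y))).mp h
  obtain ⟨a, ha⟩ := hv ⟨f, Submodule.subset_span hf⟩
  obtain ⟨b, hb⟩ := hv ⟨g, Submodule.subset_span hg⟩
  have ha' : a • (v : L13 →L[ℝ] ℝ) = f := congrArg Subtype.val ha
  have hb' : b • (v : L13 →L[ℝ] ℝ) = g := congrArg Subtype.val hb
  have h1 := hf.2
  have h2 := hg.2
  rw [← ha'] at h1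
  rw [← hb'] at h2
  simp only [_root_.smul_apply, smul_eq_mul] at h1 h2
  have h0 : (v : L13 →L[ℝ] ℝ) y ≠ 0 := by
    intro h0; rw [h0] at h1; simp at h1
  have : a = b := mul_right_cancel₀ h0 (h1.trans h2.symm)
  rw [← ha', ← hb', this]

def sg (y : L13) (i : Fin 3) : ℝ := Real.sign (y i)

lemma sg_mul (y : L13) (i : Fin 3) : sg y i * y i = |y i| := by
  unfold sg
  rcases lt_trichotomy (y i) 0 with h | h | h
  · rw [Real.sign_of_neg h, abs_of_neg h]; ring
  · simp [h]
  · rw [Real.sign_of_pos h, abs_of_pos h]; ring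

lemma sg_abs (y : L13) (i : Fin 3) : |sg y i| ≤ 1 := by
  unfold sg
  rcases Real.sign_apply_eq (y i) with h | h | h <;> rw [h] <;> simp

lemma sg_sq (y : L13) (i : Fin 3) (h : y i ≠ 0) : sg y i = 1 ∨ sg y i = -1 := by
  unfold sg
  rcases Real.sign_apply_eq_of_ne_zero _ h with h | h <;> simp [h]

lemma phi_sg (y : L13) : phi (sg y) y = ‖y‖ := by
  rw [phi_apply, sg_mul, sg_mul, sg_mul, l1norm]

lemma ne_zero_of_smooth {y : L13} (hy : ‖y‖ = 1)
    (h : finrank ℝ (Submodule.span ℝ (suppFunctionals y)) = 1) (i : Fin 3) : y i ≠ 0 := by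
  intro h0
  have key : phi (sg y) = phi (Function.update (sg y) i 1) := by
    refine supp_unique h (phi_mem _ (sg_abs y) y hy (by rw [phi_sg, hy]))
      (phi_mem _ ?_ y hy ?_)
    · intro k
      by_cases hk : k = i
      · subst hk; simp
      · simp [hk, sg_abs]
    · rw [← hy, ← phi_sg, phi_apply, phi_apply]
      fin_cases i <;> simp_all
  have := congrArg (fun f => f (WithLp.toLp 1 (Pi.single i 1))) key
  simp only [phi_apply] at this
  have hs : sg y i = 0 := by simp [sg, h0]
  fin_cases i <;> simp_all

lemma supp_eq {y : L13} (hy : ‖y‖ = 1)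
    (h : finrank ℝ (Submodule.span ℝ (suppFunctionals y)) = 1) :
    suppFunctionals y = {phi (sg y)} := by
  have hm := phi_mem _ (sg_abs y) y hy (by rw [phi_sg, hy])
  ext f
  exact ⟨fun hf => supp_unique h hf hm, fun hf => by rw [hf]; exact hm⟩

lemma cube_decomp (x : Linf3) (hx : ‖x‖ ≤ 1) :
    ∃ c : Fin 4 → ℝ, ∑ j, |c j| ≤ 1 ∧ x = ∑ j, c j • vert j := by
  have hx' : ∀ i, |x i| ≤ 1 := fun i => (norm_le_pi_norm x i).trans hx
  have p : ∀ i, 0 ≤ 1 + x i := fun i => by linarith [(abs_le.mp (hx' i)).1]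
  have q : ∀ i, 0 ≤ 1 - x i := fun i => by linarith [(abs_le.mp (hx' i)).2]
  have ab : ∀ a b : ℝ, 0 ≤ a → 0 ≤ b → |a - b| ≤ a + b := fun a b ha hb => by
    rw [abs_le]; constructor <;> linarith
  set a := x 0 with ha
  set b := x 1 with hb
  set c := x 2 with hc
  have w := fun (u v w : ℝ) (hu : 0 ≤ u) (hv : 0 ≤ v) (hw : 0 ≤ w) =>
    (by positivity : 0 ≤ u * v * w / 8)
  refine ⟨![(1+a)*(1+b)*(1+c)/8 - (1-a)*(1-b)*(1-c)/8,
    (1-a)*(1+b)*(1+c)/8 - (1+a)*(1-b)*(1-c)/8,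
    (1-a)*(1-b)*(1+c)/8 - (1+a)*(1+b)*(1-c)/8,
    (1+a)*(1-b)*(1+c)/8 - (1-a)*(1+b)*(1-c)/8], ?_, ?_⟩
  · simp only [Fin.sum_univ_four, Matrix.cons_val]
    have h1 := ab _ _ (w _ _ _ (p 0) (p 1) (p 2)) (w _ _ _ (q 0) (q 1) (q 2))
    have h2 := ab _ _ (w _ _ _ (q 0) (p 1) (p 2)) (w _ _ _ (p 0) (q 1) (q 2))
    have h3 := ab _ _ (w _ _ _ (q 0) (q 1) (p 2)) (w _ _ _ (p 0) (p 1) (q 2))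
    have h4 := ab _ _ (w _ _ _ (p 0) (q 1) (p 2)) (w _ _ _ (q 0) (p 1) (q 2))
    refine (add_le_add (add_le_add (add_le_add h1 h2) h3) h4).trans (le_of_eq ?_)
    simp only [← ha, ← hb, ← hc]
    ring
  · ext i
    fin_cases i <;>
      simp [Fin.sum_univ_four, vert, x₁, x₂, x₃, x₄, ← ha, ← hb, ← hc] <;> ring

lemma norm_le_one_of_vert (A : Linf3 →L[ℝ] L13) (h : ∀ j, ‖A (vert j)‖ ≤ 1) : ‖A‖ ≤ 1 := by
  refine ContinuousLinearMap.opNorm_le_of_unit_norm zero_le_one fun x hx => ?_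
  obtain ⟨c, hc, rfl⟩ := cube_decomp x hx.le
  rw [map_sum]
  refine (norm_sum_le _ _).trans (le_trans (Finset.sum_le_sum fun j _ => ?_) hc)
  rw [map_smul, norm_smul, Real.norm_eq_abs]
  exact mul_le_of_le_one_right (abs_nonneg _) (h j)

lemma norm_vert (j : Fin 4) : ‖vert j‖ ≤ 1 := by
  rw [pi_norm_le_iff_of_nonneg zero_le_one]
  intro i
  fin_cases j <;> fin_cases i <;> simp [vert, x₁, x₂, x₃, x₄]

/-- the functional `A ↦ s · A x` -/
def FF (s : Fin 3 → ℝ) (x : Linf3) : (Linf3 →L[ℝ] L13) →L[ℝ] ℝ :=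
  (phi s).comp (ContinuousLinearMap.apply ℝ L13 x)

lemma FF_apply (s : Fin 3 → ℝ) (x : Linf3) (A : Linf3 →L[ℝ] L13) : FF s x A = phi s (A x) := by
  simp [FF]

lemma FF_mem (T : Linf3 →L[ℝ] L13) (hT : ‖T‖ = 1) (j : Fin 4) (h : ‖T (vert j)‖ = 1) :
    FF (sg (T (vert j))) (vert j) ∈ suppFunctionals T := by
  have h1 : FF (sg (T (vert j))) (vert j) T = 1 := by rw [FF_apply, phi_sg, h]
  refine ⟨le_antisymm ?_ ?_, h1⟩
  · refine ContinuousLinearMap.opNorm_le_bound _ zero_le_one fun A => ?_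
    rw [one_mul, FF_apply]
    refine (phi_le _ (sg_abs _) _).trans ((A.le_opNorm _).trans ?_)
    exact mul_le_of_le_one_right (norm_nonneg _) (norm_vert j)
  · have := (FF (sg (T (vert j))) (vert j)).le_opNorm T
    rw [h1, hT] at this
    simpa using this

lemma abs_near {a b : ℝ} (h : |b| < |a|) : |a + b| = Real.sign a * (a + b) := by
  rcases lt_trichotomy a 0 with h0 | h0 | h0
  · rw [abs_of_neg h0] at h
    rw [Real.sign_of_neg h0, abs_of_neg (by linarith [le_abs_self b])]; ring
  · subst h0; simp at h; linarith [abs_nonneg b]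
  · rw [abs_of_pos h0] at h
    rw [Real.sign_of_pos h0, abs_of_pos (by linarith [neg_abs_le b])]; ring

lemma norm_near (T S : Linf3 →L[ℝ] L13) (h : ∀ j, ‖T (vert j)‖ = 1)
    (hS : ∀ j, FF (sg (T (vert j))) (vert j) S = 0) (t : ℝ)
    (ht : ∀ j i, |t * S (vert j) i| < |T (vert j) i|) : ‖T + t • S‖ ≤ 1 := by
  refine norm_le_one_of_vert _ fun j => ?_
  have e : ∀ i, |T (vert j) i + t * S (vert j) i| = _ := fun i => abs_near (ht j i)
  have h1 := phi_sg (T (vert j))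
  have h2 := hS j
  rw [FF_apply, phi_apply] at h2
  rw [h j, phi_apply] at h1
  rw [l1norm]
  simp only [_root_.add_apply, _root_.smul_apply, PiLp.add_apply,
    PiLp.smul_apply, smul_eq_mul, e]
  simp only [sg] at h1 h2
  linear_combination h1 + t * h2

lemma supp_sub (T : Linf3 →L[ℝ] L13) (h : ∀ j, ‖T (vert j)‖ = 1)
    (hn : ∀ j i, T (vert j) i ≠ 0) {F : (Linf3 →L[ℝ] L13) →L[ℝ] ℝ} (hF : F ∈ suppFunctionals T)
    (S : Linf3 →L[ℝ] L13) (hS : ∀ j, FF (sg (T (vert j))) (vert j) S = 0) : F S = 0 := by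
  have ev : ∀ᶠ t : ℝ in nhds 0, ∀ j i, |t * S (vert j) i| < |T (vert j) i| := by
    rw [Filter.eventually_all]; intro j
    rw [Filter.eventually_all]; intro i
    have hc : Continuous fun t : ℝ => |t * S (vert j) i| := by fun_prop
    have := hc.tendsto 0
    simp only [zero_mul, abs_zero] at this
    exact this.eventually_lt_const (abs_pos.mpr (hn j i))
  obtain ⟨t, ht, htp⟩ := ((ev.filter_mono nhdsWithin_le_nhds).and
    (self_mem_nhdsWithin : Ioi (0 : ℝ) ∈ nhdsWithin 0 (Ioi 0))).exists
  have htp : 0 < t := htp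
  have key : ∀ u : ℝ, ‖T + u • S‖ ≤ 1 → u * F S ≤ 0 := by
    intro u hu
    have h1 := (le_abs_self _).trans (F.le_opNorm (T + u • S))
    rw [hF.1, one_mul, map_add, map_smul, hF.2, smul_eq_mul] at h1
    linarith
  have a := key t (norm_near T S h hS t ht)
  have b := key (-t) (norm_near T S h hS (-t) (by simpa [abs_mul] using ht))
  have : t * F S = 0 := by linarith
  exact (mul_eq_zero.mp this).resolve_left (ne_of_gt htp)

/-- elementary operator sending `e_k` to `e_i` -/
def elem (k i : Fin 3) : Linf3 →L[ℝ] L13 :=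
  (ContinuousLinearMap.proj k : Linf3 →L[ℝ] ℝ).smulRight (WithLp.toLp 1 (Pi.single i 1) : L13)

lemma FF_elem (s : Fin 3 → ℝ) (x : Linf3) (k i : Fin 3) : FF s x (elem k i) = s i * x k := by
  rw [FF_apply, phi_apply]
  fin_cases i <;> simp [elem]

lemma lin_indep (s : Fin 4 → Fin 3 → ℝ) (hs : ∀ j i, s j i = 1 ∨ s j i = -1)
    (hne : ¬ ∀ j, s j = s 0 ∨ s j = -s 0) :
    LinearIndependent ℝ fun j => FF (s j) (vert j) := by
  refine (Fintype.linearIndependent_iff (R := ℝ) (M := (Linf3 →L[ℝ] L13) →L[ℝ] ℝ)).mpr ?_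
  intro c hc
  have e : ∀ k i, ∑ j, c j * (s j i * vert j k) = 0 := fun k i => by
    have := congrArg (fun f => f (elem k i)) hc
    simpa [_root_.sum_apply, FF_elem] using this
  have d : ∀ j, ∃ ε : ℝ, (ε = 1 ∨ ε = -1) ∧ ∀ i, c j * s j i = ε * (c 0 * s 0 i) := by
    intro j
    have e' : ∀ i, c 1 * s 1 i = -(c 0 * s 0 i) ∧ c 2 * s 2 i = c 0 * s 0 i ∧
        c 3 * s 3 i = -(c 0 * s 0 i) := fun i => by
      have e0 := e 0 i
      have e1 := e 1 i
      have e2 := e 2 i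
      simp [Fin.sum_univ_four, vert, x₁, x₂, x₃, x₄] at e0 e1 e2
      refine ⟨?_, ?_, ?_⟩ <;> linarith
    fin_cases j
    · exact ⟨1, by simp, by simp⟩
    · exact ⟨-1, by simp, fun i => by simp [(e' i).1]⟩
    · exact ⟨1, by simp, fun i => by simp [(e' i).2.1]⟩
    · exact ⟨-1, by simp, fun i => by simp [(e' i).2.2]⟩
  by_contra hcon
  push Not at hcon
  obtain ⟨l, hl⟩ := hcon
  have c0 : c 0 ≠ 0 := by
    intro h0
    obtain ⟨ε, -, h⟩ := d l
    have := h 0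
    rw [h0] at this
    rcases hs l 0 with h | h <;> rw [h] at this <;> simp at this <;> exact hl this
  apply hne
  intro j
  obtain ⟨ε, hε, h⟩ := d j
  have hj : c j = c 0 ∨ c j = - c 0 := by
    have h0 := h 0
    rcases hε with hε | hε <;> rcases hs j 0 with h1 | h1 <;> rcases hs 0 0 with h2 | h2 <;>
      rw [hε, h1, h2] at h0 <;>
      first
        | (left; linarith)
        | (right; linarith)
  rcases hε with hε | hε <;> rcases hj with hj | hj
  · left; ext i; apply mul_left_cancel₀ c0; have := h i; rw [hj, hε] at this; linarith
  · right; ext i; apply mul_left_cancel₀ c0; have := h i; rw [hj, hε] at this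
    simp only [Pi.neg_apply]; linarith
  · right; ext i; apply mul_left_cancel₀ c0; have := h i; rw [hj, hε] at this
    simp only [Pi.neg_apply]; linarith
  · left; ext i; apply mul_left_cancel₀ c0; have := h i; rw [hj, hε] at this; linarith

lemma sg_neg (y : L13) : sg (-y) = -sg y := by
  ext i; simp [sg, Real.sign_neg]

lemma phi_neg (s : Fin 3 → ℝ) : phi (-s) = -phi s := by
  ext y; simp [phi_apply]; ring

lemma pm_eq {y : L13} (hy : ‖y‖ = 1)
    (h : finrank ℝ (Submodule.span ℝ (suppFunctionals y)) = 1) (σ : Fin 3 → ℝ)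
    (hσ : sg y = σ ∨ sg y = -σ) : pm (suppFunctionals y) = {phi σ, -phi σ} := by
  rw [supp_eq hy h, pm]
  rcases hσ with hσ | hσ <;> rw [hσ]
  · ext f; simp [or_comm]
  · rw [phi_neg]; ext f; simp

theorem stmt_10
    (T : Linf3 →L[ℝ] L13) (hT : ‖T‖ = 1)
    (hMT : MTExt T = {x₁, -x₁, x₂, -x₂, x₃, -x₃, x₄, -x₄})
    (h1 : (Sk T 1).encard = 8)
    (hJ : ∃ xi ∈ Sk T 1, ∃ xj ∈ Sk T 1,
      pm (suppFunctionals (T xi)) ≠ pm (suppFunctionals (T xj)))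
    :
    finrank ℝ (Submodule.span ℝ (suppFunctionals T)) = 4 := by
  set V : Set Linf3 := {x₁, -x₁, x₂, -x₂, x₃, -x₃, x₄, -x₄} with hV
  have hVf : V.Finite := by simp [hV]
  have hsub : Sk T 1 ⊆ V := fun x hx => hMT ▸ hx.1
  have hVc : V.encard ≤ 8 := by
    have l0 : ({-x₄} : Set Linf3).encard ≤ 1 := by simp
    have step : ∀ (s : Set Linf3) (a : Linf3) (n : ℕ), s.encard ≤ n →
        (insert a s).encard ≤ ((n + 1 : ℕ) : ℕ∞) := fun s a n h => by
      refine (Set.encard_insert_le s a).trans ?_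
      push_cast
      gcongr
    exact_mod_cast step _ x₁ 7 <| step _ (-x₁) 6 <| step _ x₂ 5 <| step _ (-x₂) 4 <|
      step _ x₃ 3 <| step _ (-x₃) 2 <| step _ x₄ 1 <| by exact_mod_cast l0
  have hSk : Sk T 1 = V := (hVf.subset hsub).eq_of_subset_of_encard_le hsub (by rw [h1]; exact hVc)
  have hvV : ∀ j, vert j ∈ Sk T 1 := by
    intro j
    rw [hSk]
    fin_cases j <;> simp [vert, hV]
  have hnS : ∀ x ∈ Sk T 1, ‖T x‖ = 1 := fun x hx => by
    rw [← hT]; exact hx.1.1.2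
  have hn : ∀ j, ‖T (vert j)‖ = 1 := fun j => hnS _ (hvV j)
  have hz : ∀ j i, T (vert j) i ≠ 0 := fun j i => ne_zero_of_smooth (hn j) (hvV j).2 i
  have hne : ¬ ∀ j, sg (T (vert j)) = sg (T (vert 0)) ∨ sg (T (vert j)) = -sg (T (vert 0)) := by
    intro hall
    have hall' : ∀ x ∈ Sk T 1, sg (T x) = sg (T (vert 0)) ∨ sg (T x) = -sg (T (vert 0)) := by
      intro x hx
      have hx' : ∃ j, x = vert j ∨ x = -vert j := by
        rw [hSk] at hx
        simp only [hV, Set.mem_insert_iff, Set.mem_singleton_iff] at hx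
        rcases hx with h | h | h | h | h | h | h | h
        · exact ⟨0, Or.inl h⟩
        · exact ⟨0, Or.inr h⟩
        · exact ⟨1, Or.inl h⟩
        · exact ⟨1, Or.inr h⟩
        · exact ⟨2, Or.inl h⟩
        · exact ⟨2, Or.inr h⟩
        · exact ⟨3, Or.inl h⟩
        · exact ⟨3, Or.inr h⟩
      obtain ⟨j, rfl | rfl⟩ := hx'
      · exact hall j
      · rw [map_neg, sg_neg]
        rcases hall j with h | h <;> rw [h]
        · right; rfl
        · left; exact neg_neg _
    obtain ⟨xi, hi, xj, hj, hij⟩ := hJ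
    exact hij ((pm_eq (hnS _ hi) hi.2 _ (hall' _ hi)).trans
      (pm_eq (hnS _ hj) hj.2 _ (hall' _ hj)).symm)
  have hli := lin_indep (fun j => sg (T (vert j))) (fun j i => sg_sq _ i (hz j i)) hne
  have hspan : Submodule.span ℝ (suppFunctionals T) =
      Submodule.span ℝ (Set.range fun j => FF (sg (T (vert j))) (vert j)) := by
    apply le_antisymm
    · rw [Submodule.span_le]
      intro F hF
      have hmem : (F : (Linf3 →L[ℝ] L13) →ₗ[ℝ] ℝ) ∈ Submodule.span ℝ (Set.range fun j =>
          (FF (sg (T (vert j))) (vert j) : (Linf3 →L[ℝ] L13) →ₗ[ℝ] ℝ)) := by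
        apply mem_span_of_iInf_ker_le_ker
        intro S hS
        simp only [Submodule.mem_iInf, LinearMap.mem_ker] at hS ⊢
        exact supp_sub T hn hz hF S hS
      rw [Submodule.mem_span_range_iff_exists_fun] at hmem
      obtain ⟨c, hc⟩ := hmem
      rw [SetLike.mem_coe, Submodule.mem_span_range_iff_exists_fun]
      refine ⟨c, ?_⟩
      ext S
      have := congrArg (fun f => f S) hc
      simpa [_root_.sum_apply] using this
    · rw [Submodule.span_le]
      rintro _ ⟨j, rfl⟩
      exact Submodule.subset_span (FF_mem T hT j (hn j))
  rw [hspan, finrank_span_eq_card hli]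
  simp
end
end
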